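/- Let G be a connected simple graph on a finite, linearly ordered vertex set V, with root r and level function L(v) = dist(r, v). Then the number of triangles of G (unordered triples of pairwise adjacent vertices) equals the cardinality of the set of ordered triples (u, v, w) of vertices such that u, v, w are pairwise adjacent in G, L(u) = L(v), u < v, and either L(w) ≠ L(u), or L(w) = L(u) and v < w. (This is the correctness of the cover-edge triangle counting algorithm CETC: each triangle is counted exactly once.) -/

import Mathlib

open Finset

/-- correctness of the CETC algorithm: In a connected simple
graph on a finite linearly ordered vertex set, with root `r` and level function
`L v = dist r v`, the number of triangles equals the number of ordered triples
`(u, v, w)` of pairwise adjacent vertices with `L u = L v`, `u < v`, and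
either `L w ≠ L u`, or `L w = L u` and `v < w`. -/
theorem cetc_correctness {V : Type*} [Fintype V] [LinearOrder V]
    (G : SimpleGraph V) [DecidableRel G.Adj] (hG : G.Connected) (r : V) :
    (G.cliqueFinset 3).card =
      (Finset.univ.filter (fun t : V × V × V =>
        G.Adj t.1 t.2.1 ∧ G.Adj t.1 t.2.2 ∧ G.Adj t.2.1 t.2.2 ∧
        G.dist r t.1 = G.dist r t.2.1 ∧ t.1 < t.2.1 ∧
        (G.dist r t.2.2 ≠ G.dist r t.1 ∨
          (G.dist r t.2.2 = G.dist r t.1 ∧ t.2.1 < t.2.2)))).card := by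
  symm
  have key : ∀ a b, G.Adj a b → G.dist r a ≤ G.dist r b + 1 := by
    intro a b h
    have h1 := hG.dist_triangle (u := r) (v := b) (w := a)
    have h2 : G.dist b a = 1 := SimpleGraph.dist_eq_one_iff_adj.mpr h.symm
    omega
  refine Finset.card_bij (fun t _ => {t.1, t.2.1, t.2.2}) ?_ ?_ ?_
  · rintro ⟨u, v, w⟩ h
    simp only [Finset.mem_filter, Finset.mem_univ, true_and] at h
    rw [SimpleGraph.mem_cliqueFinset_iff, SimpleGraph.is3Clique_triple_iff]
    exact ⟨h.1, h.2.1, h.2.2.1⟩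
  · rintro ⟨u, v, w⟩ h ⟨u2, v2, w2⟩ h2 e
    simp only [Finset.mem_filter, Finset.mem_univ, true_and] at h h2 e
    obtain ⟨a1, a2, a3, l, lt, c⟩ := h
    obtain ⟨b1, b2, b3, l2, lt', c2⟩ := h2
    have n1 := a2.ne
    have n2 := a3.ne
    have m1 := b2.ne
    have m2 := b3.ne
    have e1 : u2 ∈ ({u, v, w} : Finset V) := by rw [e]; simp
    have e2 : v2 ∈ ({u, v, w} : Finset V) := by rw [e]; simp
    have e3 : w2 ∈ ({u, v, w} : Finset V) := by rw [e]; simp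
    simp only [Finset.mem_insert, Finset.mem_singleton] at e1 e2 e3
    clear key a1 a2 a3 b1 b2 b3 e
    rcases e1 with rfl | rfl | rfl <;> rcases e2 with rfl | rfl | rfl <;>
      rcases e3 with rfl | rfl | rfl <;> grind
  · intro s hs
    rw [SimpleGraph.mem_cliqueFinset_iff, SimpleGraph.is3Clique_iff] at hs
    obtain ⟨a, b, c, hab, hac, hbc, rfl⟩ := hs
    -- an ordered description of the image suffices
    have main : ∀ x y z : V, G.Adj x y → G.Adj x z → G.Adj y z → x < y → y < z →
        ∃ u v w : V, (G.Adj u v ∧ G.Adj u w ∧ G.Adj v w ∧ G.dist r u = G.dist r v ∧ u < v ∧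
          (G.dist r w ≠ G.dist r u ∨ (G.dist r w = G.dist r u ∧ v < w))) ∧
          ({u, v, w} : Finset V) = {x, y, z} := by
      intro x y z hxy hxz hyz l1 l2
      have k1 := key _ _ hxy
      have k2 := key _ _ hxy.symm
      have k3 := key _ _ hxz
      have k4 := key _ _ hxz.symm
      have k5 := key _ _ hyz
      have k6 := key _ _ hyz.symm
      by_cases p : G.dist r x = G.dist r y
      · refine ⟨x, y, z, ⟨hxy, hxz, hyz, p, l1, ?_⟩, rfl⟩
        by_cases q : G.dist r z = G.dist r x
        · exact Or.inr ⟨q, l2⟩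
        · exact Or.inl q
      · by_cases q : G.dist r x = G.dist r z
        · exact ⟨x, z, y, ⟨hxz, hxy, hyz.symm, q, l1.trans l2, Or.inl (Ne.symm p)⟩, by grind⟩
        · exact ⟨y, z, x, ⟨hyz, hxy.symm, hxz.symm, by omega, l2, Or.inl p⟩, by grind⟩
    have fin : ∃ u v w : V, (G.Adj u v ∧ G.Adj u w ∧ G.Adj v w ∧ G.dist r u = G.dist r v ∧ u < v ∧
          (G.dist r w ≠ G.dist r u ∨ (G.dist r w = G.dist r u ∧ v < w))) ∧
          ({u, v, w} : Finset V) = {a, b, c} := by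
      rcases lt_or_gt_of_ne hab.ne with h1 | h1 <;> rcases lt_or_gt_of_ne hac.ne with h2 | h2 <;>
        rcases lt_or_gt_of_ne hbc.ne with h3 | h3
      · exact main a b c hab hac hbc h1 h3
      · rw [show ({a, b, c} : Finset V) = {a, c, b} by grind]
        exact main a c b hac hab hbc.symm h2 h3
      · exact absurd (h1.trans h3) h2.asymm
      · rw [show ({a, b, c} : Finset V) = {c, a, b} by grind]
        exact main c a b hac.symm hbc.symm hab h2 h1
      · rw [show ({a, b, c} : Finset V) = {b, a, c} by grind]
        exact main b a c hab.symm hbc hac h1 h2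
      · exact absurd (h3.trans h1) h2.asymm
      · rw [show ({a, b, c} : Finset V) = {b, c, a} by grind]
        exact main b c a hbc hab.symm hac.symm h3 h2
      · rw [show ({a, b, c} : Finset V) = {c, b, a} by grind]
        exact main c b a hbc.symm hac.symm hab.symm h3 h1
    obtain ⟨u, v, w, h, e⟩ := fin
    exact ⟨(u, v, w), by simpa only [Finset.mem_filter, Finset.mem_univ, true_and] using h, e⟩
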